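/- arXiv:2004.14521 — 2 statements merged into one kernel-verified Lean document; each statement's English description precedes it below -/
import Mathlib

section
/- In the setting of the scaled proximal gradient one-step theorem (g_n continuously differentiable and h_n convex proper almost surely, C_n random positive definite matrices, with assumptions (i) and (ii) of that theorem), suppose θ̂_n is not necessarily a minimizer of g_n + h_n but instead satisfies the approximate fixed-point condition √n ‖prox_{h_n}^{C_n}(θ̂_n − C_n⁻¹ ∇g_n(θ̂_n)) − θ̂_n‖ → 0 in probability. Then for any √n-consistent estimator θ̂_init,n of θ̂_n, the one-step estimator θ̂_ose,n ∈ prox_{h_n}^{C_n}(θ̂_init,n − C_n⁻¹ ∇g_n(θ̂_init,n)) is asymptotically equivalent to θ̂_n. -/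
open MeasureTheory Filter Topology ProbabilityTheory

noncomputable section

/-- Apply a `d × d` real matrix to a vector of `EuclideanSpace ℝ (Fin d)`. -/
def mApp {d : ℕ} (C : Matrix (Fin d) (Fin d) ℝ) (v : EuclideanSpace ℝ (Fin d)) :
    EuclideanSpace ℝ (Fin d) :=
  Matrix.toEuclideanLin C v

/-- The squared `C`-norm `‖v‖_C² = vᵀ C v`. -/
def cnormSq {d : ℕ} (C : Matrix (Fin d) (Fin d) ℝ) (v : EuclideanSpace ℝ (Fin d)) : ℝ :=
  inner ℝ v (mApp C v)

/-- The scaled proximal operator (as a set of minimizers):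
`prox_f^C(x) = argmin_w { f(w) + (1/2)‖w − x‖_C² }`. -/
def proxSet {d : ℕ} (f : EuclideanSpace ℝ (Fin d) → EReal) (C : Matrix (Fin d) (Fin d) ℝ)
    (x : EuclideanSpace ℝ (Fin d)) : Set (EuclideanSpace ℝ (Fin d)) :=
  {w | ∀ u, f w + ((cnormSq C (w - x) / 2 : ℝ) : EReal) ≤ f u + ((cnormSq C (u - x) / 2 : ℝ) : EReal)}

/-- A proper extended-real-valued function: not identically `+∞`, never `−∞`. -/
def ProperFn {d : ℕ} (f : EuclideanSpace ℝ (Fin d) → EReal) : Prop :=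
  (∃ x, f x ≠ ⊤) ∧ ∀ x, f x ≠ ⊥

/-- Convexity for extended-real-valued functions. -/
def ConvexFnE {d : ℕ} (f : EuclideanSpace ℝ (Fin d) → EReal) : Prop :=
  ∀ x y : EuclideanSpace ℝ (Fin d), ∀ a b : ℝ, 0 ≤ a → 0 ≤ b → a + b = 1 →
    f (a • x + b • y) ≤ (a : EReal) * f x + (b : EReal) * f y

/-- Operator norm of a matrix acting on Euclidean space. -/
def matNorm {d : ℕ} (C : Matrix (Fin d) (Fin d) ℝ) : ℝ :=
  ‖(Matrix.toEuclideanCLM (𝕜 := ℝ) C : EuclideanSpace ℝ (Fin d) →L[ℝ] EuclideanSpace ℝ (Fin d))‖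

/-- Convergence to zero in probability of a sequence of random vectors. -/
def TendstoInProb {Ω : Type*} [MeasurableSpace Ω] (P : Measure Ω) {E : Type*} [Norm E]
    (Y : ℕ → Ω → E) : Prop :=
  ∀ ε : ℝ, 0 < ε → Tendsto (fun n => P {ω | ε ≤ ‖Y n ω‖}) atTop (𝓝 0)

/-- Boundedness in probability (`O_P(1)`). -/
def BoundedInProb {Ω : Type*} [MeasurableSpace Ω] (P : Measure Ω) {E : Type*} [Norm E]
    (Y : ℕ → Ω → E) : Prop :=
  ∀ ε : ℝ, 0 < ε → ∃ M : ℝ, ∃ N : ℕ, ∀ n ≥ N, P {ω | M < ‖Y n ω‖} ≤ ENNReal.ofReal ε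

/-- `Y_n = O_P(r_n)`. -/
def BigOP {Ω : Type*} [MeasurableSpace Ω] (P : Measure Ω) {E : Type*} [Norm E]
    (Y : ℕ → Ω → E) (r : ℕ → ℝ) : Prop :=
  ∀ ε : ℝ, 0 < ε → ∃ M : ℝ, ∃ N : ℕ, ∀ n ≥ N, P {ω | M * r n < ‖Y n ω‖} ≤ ENNReal.ofReal ε

/-- A sequence of events holds with high probability (probability tending to one). -/
def WithHighProb {Ω : Type*} [MeasurableSpace Ω] (P : Measure Ω) (A : ℕ → Set Ω) : Prop :=
  Tendsto (fun n => P (A n)) atTop (𝓝 1)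

end

lemma aux_inner_symm {d : ℕ} {C : Matrix (Fin d) (Fin d) ℝ} (hC : C.PosDef)
    (u v : EuclideanSpace ℝ (Fin d)) : inner ℝ u (mApp C v) = inner ℝ v (mApp C u) := by
  have h := (Matrix.isSymmetric_toEuclideanLin_iff (A := C)).2 hC.isHermitian
  rw [real_inner_comm]
  exact h v u

lemma aux_add {d : ℕ} (C : Matrix (Fin d) (Fin d) ℝ)
    (u v : EuclideanSpace ℝ (Fin d)) : mApp C (u + v) = mApp C u + mApp C v := by
  simp [mApp]

lemma aux_sub {d : ℕ} (C : Matrix (Fin d) (Fin d) ℝ)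
    (u v : EuclideanSpace ℝ (Fin d)) : mApp C (u - v) = mApp C u - mApp C v := by
  simp [mApp]

lemma aux_smul {d : ℕ} (C : Matrix (Fin d) (Fin d) ℝ) (t : ℝ)
    (u : EuclideanSpace ℝ (Fin d)) : mApp C (t • u) = t • mApp C u := by
  simp [mApp]

lemma aux_norm {d : ℕ} (C : Matrix (Fin d) (Fin d) ℝ)
    (u : EuclideanSpace ℝ (Fin d)) : ‖mApp C u‖ ≤ matNorm C * ‖u‖ :=
  (Matrix.toEuclideanCLM (𝕜 := ℝ) C).le_opNorm u

lemma aux_mul {d : ℕ} (A B : Matrix (Fin d) (Fin d) ℝ)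
    (u : EuclideanSpace ℝ (Fin d)) : mApp (A * B) u = mApp A (mApp B u) := by
  simp [mApp, Matrix.toLpLin_apply]

lemma aux_msub {d : ℕ} (A B : Matrix (Fin d) (Fin d) ℝ)
    (u : EuclideanSpace ℝ (Fin d)) : mApp (A - B) u = mApp A u - mApp B u := by
  simp [mApp]

lemma aux_mone {d : ℕ} 
    (u : EuclideanSpace ℝ (Fin d)) : mApp 1 u = u := by
  simp [mApp]

lemma aux_finite {d : ℕ} {f : EuclideanSpace ℝ (Fin d) → EReal} {C : Matrix (Fin d) (Fin d) ℝ}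
    {x a : EuclideanSpace ℝ (Fin d)} (hp : ProperFn f) (ha : a ∈ proxSet f C x) :
    ∃ r : ℝ, f a = r := by
  obtain ⟨⟨z, hz⟩, hb⟩ := hp
  have h := ha z
  have hz' : f z = ((f z).toReal : EReal) := (EReal.coe_toReal hz (hb z)).symm
  have hne : f a ≠ ⊤ := by
    intro ht
    rw [ht, hz', EReal.top_add_coe, ← EReal.coe_add, top_le_iff] at h
    exact EReal.coe_ne_top _ h
  exact ⟨_, (EReal.coe_toReal hne (hb a)).symm⟩

lemma aux_var {d : ℕ} {f : EuclideanSpace ℝ (Fin d) → EReal} {C : Matrix (Fin d) (Fin d) ℝ}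
    (hC : C.PosDef) (hf : ConvexFnE f)
    {x a b : EuclideanSpace ℝ (Fin d)} {r s : ℝ} (hr : f a = r) (hs : f b = s)
    (ha : a ∈ proxSet f C x) {t : ℝ} (ht : 0 < t) (ht1 : t ≤ 1) :
    r ≤ s + inner ℝ (b - a) (mApp C (a - x)) + t / 2 * inner ℝ (b - a) (mApp C (b - a)) := by
  have h1 := ha ((1 - t) • a + t • b)
  have h2 := hf a b (1 - t) t (by linarith) ht.le (by ring)
  have h3 := h1.trans (add_le_add_left h2 _)
  rw [hr, hs] at h3
  have h4 : r + cnormSq C (a - x) / 2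
      ≤ ((1 - t) * r + t * s) + cnormSq C ((1 - t) • a + t • b - x) / 2 := by
    exact_mod_cast h3
  have e : (1 - t) • a + t • b - x = (a - x) + t • (b - a) := by module
  have e2 : cnormSq C ((1 - t) • a + t • b - x) = cnormSq C (a - x)
      + 2 * t * inner ℝ (b - a) (mApp C (a - x)) + t ^ 2 * inner ℝ (b - a) (mApp C (b - a)) := by
    rw [e]
    unfold cnormSq
    rw [aux_add, aux_smul, inner_add_left, inner_add_right, inner_add_right]
    simp only [inner_smul_left, inner_smul_right]
    rw [aux_inner_symm hC (a - x) (b - a)]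
    simp only [conj_trivial]
    ring
  rw [e2] at h4
  refine le_of_mul_le_mul_left (a := t) ?_ ht
  nlinarith

lemma aux_firm {d : ℕ} {f : EuclideanSpace ℝ (Fin d) → EReal} {C : Matrix (Fin d) (Fin d) ℝ}
    (hC : C.PosDef) (hf : ConvexFnE f) (hp : ProperFn f)
    {x y a b : EuclideanSpace ℝ (Fin d)}
    (ha : a ∈ proxSet f C x) (hb : b ∈ proxSet f C y) :
    inner ℝ (a - b) (mApp C (a - b)) ≤ inner ℝ (a - b) (mApp C (x - y)) := by
  obtain ⟨r, hr⟩ := aux_finite hp ha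
  obtain ⟨s, hs⟩ := aux_finite hp hb
  set Q : ℝ := inner ℝ (a - b) (mApp C (a - b)) with hQ
  have hQ' : inner ℝ (b - a) (mApp C (b - a)) = Q := by
    rw [← neg_sub a b, hQ, show mApp C (-(a - b)) = - mApp C (a - b) by simp [mApp], inner_neg_neg]
  have key : ∀ t : ℝ, 0 < t → t ≤ 1 → Q ≤ inner ℝ (a - b) (mApp C (x - y)) + t * Q := by
    intro t ht ht1
    have h1 := aux_var hC hf hr hs ha ht ht1
    have h2 := aux_var hC hf hs hr hb ht ht1
    rw [hQ'] at h1
    have e : inner ℝ (b - a) (mApp C (a - x)) + inner ℝ (a - b) (mApp C (b - y))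
        = inner ℝ (a - b) (mApp C (x - y)) - Q := by
      rw [hQ]
      simp only [aux_sub, inner_sub_left, inner_sub_right]
      ring
    rw [← hQ] at h2
    linarith
  refine le_of_forall_pos_le_add fun ε hε => ?_
  have hpos : 0 < |Q| + 1 := by positivity
  have h := key (min 1 (ε / (|Q| + 1))) (by positivity) (min_le_left _ _)
  refine h.trans (add_le_add_right ?_ _)
  calc _ ≤ min 1 (ε / (|Q| + 1)) * (|Q| + 1) :=
        mul_le_mul_of_nonneg_left (by linarith [le_abs_self Q]) (by positivity)
    _ ≤ ε / (|Q| + 1) * (|Q| + 1) := mul_le_mul_of_nonneg_right (min_le_right _ _) hpos.le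
    _ = ε := by field_simp

lemma aux_coer {d : ℕ} {H : Matrix (Fin d) (Fin d) ℝ} (hH : H.PosDef) :
    ∃ m : ℝ, 0 < m ∧ ∀ v : EuclideanSpace ℝ (Fin d), m * ‖v‖ ^ 2 ≤ inner ℝ v (mApp H v) := by
  have hpos : ∀ v : EuclideanSpace ℝ (Fin d), v ≠ 0 → 0 < inner ℝ v (mApp H v) := by
    intro v hv
    have := hH.dotProduct_mulVec_pos (x := v.ofLp) (by simpa using hv)
    rw [real_inner_comm]
    simpa [mApp, Matrix.toLpLin_apply, PiLp.inner_apply, dotProduct, mul_comm] using this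
  have hcont : Continuous fun v : EuclideanSpace ℝ (Fin d) => inner ℝ v (mApp H v) := by
    have : Continuous (mApp H) := (Matrix.toEuclideanCLM (𝕜 := ℝ) H).continuous
    fun_prop
  have hsc : ∀ v : EuclideanSpace ℝ (Fin d), v ≠ 0 →
      inner ℝ v (mApp H v) = ‖v‖ ^ 2 * inner ℝ (‖v‖⁻¹ • v) (mApp H (‖v‖⁻¹ • v)) := by
    intro v hv
    have : ‖v‖ ≠ 0 := by simpa using hv
    rw [aux_smul, inner_smul_left, inner_smul_right]
    simp only [conj_trivial]
    field_simp
  rcases (Metric.sphere (0 : EuclideanSpace ℝ (Fin d)) 1).eq_empty_or_nonempty with he | hne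
  · refine ⟨1, one_pos, fun v => ?_⟩
    rcases eq_or_ne v 0 with rfl | hv
    · simp
    · have : ‖v‖⁻¹ • v ∈ Metric.sphere (0 : EuclideanSpace ℝ (Fin d)) 1 := by
        simp [norm_smul, hv]
      rw [he] at this
      exact this.elim
  · obtain ⟨w, hw, hmin⟩ := (isCompact_sphere (0 : EuclideanSpace ℝ (Fin d)) 1).exists_isMinOn
      hne hcont.continuousOn
    have hw0 : w ≠ 0 := by
      rintro rfl
      simp at hw
    refine ⟨_, hpos w hw0, fun v => ?_⟩
    rcases eq_or_ne v 0 with rfl | hv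
    · simp
    · have : ‖v‖⁻¹ • v ∈ Metric.sphere (0 : EuclideanSpace ℝ (Fin d)) 1 := by
        simp [norm_smul, hv]
      have h2 := hmin this
      rw [hsc v hv, mul_comm]
      exact mul_le_mul_of_nonneg_left h2 (by positivity)

lemma aux_CH {d : ℕ} {C H : Matrix (Fin d) (Fin d) ℝ} (hC : C.PosDef) {η : ℝ}
    (hη : η ≤ 1 / 2) (hK : matNorm (C⁻¹ * H - 1) ≤ η) :
    matNorm (C - H) ≤ 2 * matNorm H * η := by
  have hu : IsUnit C.det := hC.isUnit.map Matrix.detMonoidHom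
  have e : C * (C⁻¹ * H - 1) = H - C := by
    rw [mul_sub, mul_one, ← mul_assoc, Matrix.mul_nonsing_inv _ hu, one_mul]
  have hnn : ∀ A : Matrix (Fin d) (Fin d) ℝ, 0 ≤ matNorm A := fun A => norm_nonneg _
  have h1 : matNorm (H - C) ≤ matNorm C * η := by
    rw [← e]
    refine le_trans ?_ (mul_le_mul_of_nonneg_left hK (hnn C))
    unfold matNorm
    rw [map_mul]
    exact norm_mul_le _ _
  have h2 : matNorm (C - H) = matNorm (H - C) := by
    unfold matNorm
    rw [map_sub, map_sub, norm_sub_rev]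
  have h3 : matNorm C ≤ matNorm H + matNorm (H - C) := by
    unfold matNorm
    rw [map_sub, norm_sub_rev]
    exact norm_le_norm_add_norm_sub' _ _
  have h4 : 0 ≤ η := (hnn _).trans hK
  rw [h2]
  have h5 : matNorm C ≤ 2 * matNorm H := by nlinarith [hnn C]
  exact h1.trans (mul_le_mul_of_nonneg_right h5 h4)

/-- deterministic bound -/
lemma aux_det {d : ℕ} {f : EuclideanSpace ℝ (Fin d) → EReal} {C H : Matrix (Fin d) (Fin d) ℝ}
    (hC : C.PosDef) (hf : ConvexFnE f) (hp : ProperFn f)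
    {m : ℝ} (hm : 0 < m)
    (hmv : ∀ v : EuclideanSpace ℝ (Fin d), m * ‖v‖ ^ 2 ≤ inner ℝ v (mApp H v))
    {η : ℝ} (hη : η ≤ 1 / 2) (hη2 : 2 * matNorm H * η ≤ m / 2)
    (hK : matNorm (C⁻¹ * H - 1) ≤ η)
    {p q dp dq a b : EuclideanSpace ℝ (Fin d)}
    (ha : a ∈ proxSet f C (p - mApp C⁻¹ dp)) (hb : b ∈ proxSet f C (q - mApp C⁻¹ dq)) :
    m / 2 * ‖a - b‖ ≤ 2 * matNorm H * η * ‖p - q‖ + ‖(dp - dq) - mApp H (p - q)‖ := by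
  have hu : IsUnit C.det := hC.isUnit.map Matrix.detMonoidHom
  have hfirm := aux_firm hC hf hp ha hb
  have hCH := aux_CH hC hη hK
  have hinv : ∀ v, mApp C (mApp C⁻¹ v) = v := by
    intro v
    rw [← aux_mul, Matrix.mul_nonsing_inv _ hu, aux_mone]
  have e1 : mApp C ((p - mApp C⁻¹ dp) - (q - mApp C⁻¹ dq))
      = mApp (C - H) (p - q) - ((dp - dq) - mApp H (p - q)) := by
    rw [aux_msub]
    simp only [aux_sub, hinv]
    abel
  rw [e1] at hfirm
  set δ := a - b
  set r := (dp - dq) - mApp H (p - q)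
  have h1 : inner ℝ δ (mApp (C - H) (p - q) - r)
      ≤ ‖δ‖ * (2 * matNorm H * η * ‖p - q‖ + ‖r‖) := by
    refine (real_inner_le_norm _ _).trans (mul_le_mul_of_nonneg_left ?_ (norm_nonneg _))
    refine (norm_sub_le _ _).trans (add_le_add_left ?_ _)
    exact (aux_norm _ _).trans (mul_le_mul_of_nonneg_right hCH (norm_nonneg _))
  have h2 : inner ℝ δ (mApp C δ) = inner ℝ δ (mApp H δ) + inner ℝ δ (mApp (C - H) δ) := by
    rw [aux_msub, inner_sub_right]; ring
  have h3 : -(m / 2 * ‖δ‖ ^ 2) ≤ inner ℝ δ (mApp (C - H) δ) := by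
    have h := abs_le.1 (abs_real_inner_le_norm δ (mApp (C - H) δ))
    have h' : ‖mApp (C - H) δ‖ ≤ m / 2 * ‖δ‖ :=
      (aux_norm _ _).trans (mul_le_mul_of_nonneg_right (hCH.trans hη2) (norm_nonneg _))
    nlinarith [h.1, mul_le_mul_of_nonneg_left h' (norm_nonneg δ)]
  have h4 := hmv δ
  have h5 : ‖δ‖ * (m / 2 * ‖δ‖) ≤ ‖δ‖ * (2 * matNorm H * η * ‖p - q‖ + ‖r‖) := by
    nlinarith
  rcases (norm_nonneg δ).eq_or_lt with h0 | h0
  · rw [← h0, mul_zero]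
    have : 0 ≤ η := (norm_nonneg _).trans hK
    have : 0 ≤ matNorm H := norm_nonneg _
    positivity
  · exact le_of_mul_le_mul_left h5 h0

open MeasureTheory Filter Topology in
/-- Corollary 2.2: the conclusion of the scaled proximal gradient one-step theorem still holds
when `θ̂ₙ` is only an approximate fixed point (at rate `o_P(n^{-1/2})`) of the scaled proximal
gradient map, rather than a minimizer of `gₙ + hₙ`. -/
theorem one_step_scaled_proximal_gradient_approx_fixed_point
    (d : ℕ) (hd : 1 ≤ d)
    {Ω : Type*} [MeasurableSpace Ω] (P : MeasureTheory.Measure Ω) [IsProbabilityMeasure P]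
    (g : ℕ → Ω → EuclideanSpace ℝ (Fin d) → ℝ)
    (dg : ℕ → Ω → EuclideanSpace ℝ (Fin d) → EuclideanSpace ℝ (Fin d))
    (h : ℕ → Ω → EuclideanSpace ℝ (Fin d) → EReal)
    (C : ℕ → Ω → Matrix (Fin d) (Fin d) ℝ)
    (θhat θinit θose : ℕ → Ω → EuclideanSpace ℝ (Fin d))
    -- P-a.s., gₙ is continuously differentiable with gradient dgₙ
    (hg : ∀ n, ∀ᵐ ω ∂P, (∀ θ, HasGradientAt (g n ω) (dg n ω θ) θ) ∧ Continuous (dg n ω))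
    -- P-a.s., hₙ is convex and proper
    (hh : ∀ n, ∀ᵐ ω ∂P, ConvexFnE (h n ω) ∧ ProperFn (h n ω))
    -- the scaling matrices are symmetric positive definite
    (hC : ∀ n, ∀ᵐ ω ∂P, (C n ω).PosDef)
    -- the approximate fixed point condition:
    -- √n ‖prox_{hₙ}^{Cₙ}(θ̂ₙ − Cₙ⁻¹ ∇gₙ(θ̂ₙ)) − θ̂ₙ‖ → 0 in probability,
    -- witnessed by a random selection φ from the prox set
    (φ : ℕ → Ω → EuclideanSpace ℝ (Fin d))
    (hφmem : ∀ n, ∀ᵐ ω ∂P,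
      φ n ω ∈ proxSet (h n ω) (C n ω) (θhat n ω - mApp (C n ω)⁻¹ (dg n ω (θhat n ω))))
    (hφ : TendstoInProb P (fun n ω => Real.sqrt n • (φ n ω - θhat n ω)))
    -- assumption (i): uniform stochastic differentiability with positive definite H
    (H : Matrix (Fin d) (Fin d) ℝ) (hH : H.PosDef)
    (hi : ∀ M : ℝ, 0 < M → ∀ ε : ℝ, 0 < ε →
      Tendsto (fun n : ℕ => P {ω | ∃ θ, Real.sqrt n * ‖θ - θhat n ω‖ < M ∧
        ε ≤ Real.sqrt n * ‖(dg n ω θ - dg n ω (θhat n ω)) - mApp H (θ - θhat n ω)‖})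
        atTop (𝓝 0))
    -- assumption (ii): Cₙ⁻¹ H → I in probability
    (hii : ∀ ε : ℝ, 0 < ε →
      Tendsto (fun n => P {ω | ε ≤ matNorm ((C n ω)⁻¹ * H - 1)}) atTop (𝓝 0))
    -- θ̂_init is a √n-consistent estimator of θ̂
    (hinit : BoundedInProb P (fun n ω => Real.sqrt n • (θinit n ω - θhat n ω)))
    -- the one-step estimator: a single scaled proximal gradient step from θ̂_init
    (hose : ∀ n, ∀ᵐ ω ∂P,
      θose n ω ∈ proxSet (h n ω) (C n ω)
        (θinit n ω - mApp (C n ω)⁻¹ (dg n ω (θinit n ω)))) :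
    -- conclusion: asymptotic equivalence of θ̂_ose and θ̂
    TendstoInProb P (fun n ω => Real.sqrt n • (θose n ω - θhat n ω)) := by
  obtain ⟨m, hm, hmv⟩ := aux_coer hH
  intro ε hε
  rw [ENNReal.tendsto_nhds_zero]
  intro ρ hρ
  obtain ⟨ρ', hρ', hρρ⟩ : ∃ ρ' : ℝ, 0 < ρ' ∧ ENNReal.ofReal ρ' ≤ ρ / 4 := by
    rcases eq_or_ne ρ ⊤ with rfl | hne
    · exact ⟨1, one_pos, by simp [ENNReal.top_div]⟩
    · have h4 : ρ / 4 ≠ ⊤ := ENNReal.div_ne_top hne (by norm_num)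
      have h0 : ρ / 4 ≠ 0 := (ENNReal.div_pos hρ.ne' (by norm_num)).ne'
      exact ⟨(ρ / 4).toReal, ENNReal.toReal_pos h0 h4, (ENNReal.ofReal_toReal h4).le⟩
  have hρ4 : 0 < ρ / 4 := ENNReal.div_pos hρ.ne' (by norm_num)
  obtain ⟨M, N, hMN⟩ := hinit ρ' hρ'
  have hHn : 0 ≤ matNorm H := norm_nonneg _
  set M' : ℝ := |M| + 1 with hM'
  have hM'0 : 0 < M' := by positivity
  obtain ⟨η, hη0, hη1, hη2, hη3⟩ : ∃ η : ℝ, 0 < η ∧ η ≤ 1 / 2 ∧ 2 * matNorm H * η ≤ m / 2 ∧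
      2 * matNorm H * η * M' ≤ m * ε / 8 := by
    set K : ℝ := 2 * matNorm H * (1 + M') + 1 with hK
    have hK0 : 0 < K := by positivity
    refine ⟨min (1 / 2) (min (m / 2 / K) (m * ε / 8 / K)), by positivity, min_le_left _ _, ?_, ?_⟩
    · set η := min (1 / 2) (min (m / 2 / K) (m * ε / 8 / K)) with hη
      have hpos : 0 < η := by positivity
      have h1 : η ≤ m / 2 / K := (min_le_right _ _).trans (min_le_left _ _)
      rw [le_div_iff₀ hK0] at h1
      have : 2 * matNorm H ≤ K := by rw [hK]; nlinarith [mul_nonneg hHn hM'0.le]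
      nlinarith
    · set η := min (1 / 2) (min (m / 2 / K) (m * ε / 8 / K)) with hη
      have hpos : 0 < η := by positivity
      have h1 : η ≤ m * ε / 8 / K := (min_le_right _ _).trans (min_le_right _ _)
      rw [le_div_iff₀ hK0] at h1
      have : 2 * matNorm H * M' ≤ K := by rw [hK]; nlinarith [mul_nonneg hHn hM'0.le]
      nlinarith
  have e1 := ENNReal.tendsto_nhds_zero.1 (hφ (ε / 2) (by positivity)) (ρ / 4) hρ4
  have e2 := ENNReal.tendsto_nhds_zero.1 (hi M' hM'0 (m * ε / 8) (by positivity)) (ρ / 4) hρ4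
  have e3 := ENNReal.tendsto_nhds_zero.1 (hii η hη0) (ρ / 4) hρ4
  filter_upwards [e1, e2, e3, eventually_ge_atTop N] with n h1 h2 h3 hn
  have h4 := (hMN n hn).trans hρρ
  set A := {ω | ε / 2 ≤ ‖Real.sqrt n • (φ n ω - θhat n ω)‖} with hA
  set B := {ω | ∃ θ, Real.sqrt n * ‖θ - θhat n ω‖ < M' ∧
        m * ε / 8 ≤ Real.sqrt n * ‖(dg n ω θ - dg n ω (θhat n ω)) - mApp H (θ - θhat n ω)‖} with hB
  set D := {ω | η ≤ matNorm ((C n ω)⁻¹ * H - 1)} with hD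
  set F := {ω | M < ‖Real.sqrt n • (θinit n ω - θhat n ω)‖} with hF
  have hsub : {ω | ε ≤ ‖Real.sqrt n • (θose n ω - θhat n ω)‖} ≤ᵐ[P]
      ((A ∪ B) ∪ (D ∪ F) : Set Ω) := by
    filter_upwards [hh n, hC n, hφmem n, hose n] with ω a1 a2 a3 a4 hω
    by_contra hcon
    have hcon' : ω ∉ (A ∪ B) ∪ (D ∪ F) := hcon
    simp only [Set.mem_union, not_or] at hcon'
    obtain ⟨⟨b1, b2⟩, b3, b4⟩ := hcon'
    have hω' : ε ≤ ‖Real.sqrt n • (θose n ω - θhat n ω)‖ := hω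
    simp only [hA, hD, hF, Set.mem_setOf_eq, not_le, not_lt] at b1 b3 b4
    have hs : 0 ≤ Real.sqrt n := Real.sqrt_nonneg _
    simp only [norm_smul, Real.norm_of_nonneg hs] at hω' b1 b4
    have c4 : Real.sqrt n * ‖θinit n ω - θhat n ω‖ < M' := by
      rw [hM']; linarith [le_abs_self M]
    have c2 : Real.sqrt n * ‖(dg n ω (θinit n ω) - dg n ω (θhat n ω))
        - mApp H (θinit n ω - θhat n ω)‖ < m * ε / 8 := by
      by_contra hc
      exact b2 ⟨_, c4, not_lt.1 hc⟩
    have hdet := aux_det a2 a1.1 a1.2 hm hmv hη1 hη2 b3.le a4 a3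
    have h5 := mul_le_mul_of_nonneg_left hdet hs
    have h6 : 2 * matNorm H * η * (Real.sqrt n * ‖θinit n ω - θhat n ω‖) ≤ m * ε / 8 :=
      (mul_le_mul_of_nonneg_left c4.le (by positivity)).trans hη3
    have h7 : m / 2 * (Real.sqrt n * ‖θose n ω - φ n ω‖) < m / 2 * (ε / 2) := by
      linarith
    have h8 := lt_of_mul_lt_mul_left h7 (by positivity)
    have h9 := mul_le_mul_of_nonneg_left
      (norm_sub_le_norm_sub_add_norm_sub (θose n ω) (φ n ω) (θhat n ω)) hs
    linarith
  calc P {ω | ε ≤ ‖Real.sqrt n • (θose n ω - θhat n ω)‖}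
      ≤ P ((A ∪ B) ∪ (D ∪ F)) := measure_mono_ae hsub
    _ ≤ (P A + P B) + (P D + P F) :=
      (measure_union_le _ _).trans (add_le_add (measure_union_le _ _) (measure_union_le _ _))
    _ ≤ (ρ / 4 + ρ / 4) + (ρ / 4 + ρ / 4) :=
      add_le_add (add_le_add h1 h2) (add_le_add h3 h4)
    _ = ρ := by
      have : ρ / 4 + ρ / 4 + (ρ / 4 + ρ / 4) = 4 * (ρ / 4) := by ring
      rw [this]
      exact ENNReal.mul_div_cancel (by norm_num) (by norm_num)
end

section
/- Let f : ℝ^d → ℝ ∪ {∞} be proper, convex, and strongly convex with modulus m > 0 on ℝ^d, and let C be a symmetric positive definite d×d matrix. Then for any x₁, x₂ ∈ ℝ^d and any w₁ ∈ prox_f^C(x₁), w₂ ∈ prox_f^C(x₂), one has ‖w₁ − w₂‖ ≤ (λ_max(C)/(λ_min(C) + m)) · ‖x₁ − x₂‖. -/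
open MeasureTheory Filter Topology ProbabilityTheory

/-- Strong convexity with modulus `m` for an extended-real-valued function:
`f − (m/2)‖·‖²` is convex. -/
def StrongConvexFnE {d : ℕ} (m : ℝ) (f : EuclideanSpace ℝ (Fin d) → EReal) : Prop :=
  ConvexFnE (fun x => f x - ((m / 2 * ‖x‖ ^ 2 : ℝ) : EReal))

lemma sp_lim (A B : ℝ) (h : ∀ t : ℝ, 0 < t → t ≤ 1 → 0 ≤ A + t * B) : 0 ≤ A := by
  by_contra hA
  push Not at hA
  have hB := abs_nonneg B
  have hden : 0 < |B| + 1 - A := by linarith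
  have h1 := h (-A / (|B| + 1 - A)) (div_pos (by linarith) hden)
    ((div_le_one hden).2 (by linarith))
  have h2 : A + -A / (|B| + 1 - A) * B = (A * (|B| + 1 - A) - A * B) / (|B| + 1 - A) := by
    field_simp
    ring
  rw [h2] at h1
  have h3 : A * (|B| + 1 - A) - A * B < 0 := by nlinarith [le_abs_self B]
  exact absurd h1 (not_le.2 (div_neg_of_neg_of_pos h3 hden))

lemma mApp_coord {d : ℕ} (C : Matrix (Fin d) (Fin d) ℝ) (hC : C.IsHermitian)
    (v : EuclideanSpace ℝ (Fin d)) (i : Fin d) :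
    inner ℝ (hC.eigenvectorBasis i) (mApp C v)
      = hC.eigenvalues i * inner ℝ (hC.eigenvectorBasis i) v := by
  have hs := (Matrix.isSymmetric_toEuclideanLin_iff (A := C)).2 hC
  have he : Matrix.toEuclideanLin C (hC.eigenvectorBasis i)
      = hC.eigenvalues i • hC.eigenvectorBasis i := by
    have := hC.mulVec_eigenvectorBasis i
    ext j
    have := congrFun this j
    simpa [Matrix.toLpLin_apply] using this
  unfold mApp
  rw [← hs, he, real_inner_smul_left]

lemma mApp_symm {d : ℕ} (C : Matrix (Fin d) (Fin d) ℝ) (hC : C.IsHermitian)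
    (v w : EuclideanSpace ℝ (Fin d)) :
    inner ℝ (mApp C v) w = inner ℝ v (mApp C w) := by
  have hs := (Matrix.isSymmetric_toEuclideanLin_iff (A := C)).2 hC
  exact hs v w

lemma mApp_lower {d : ℕ} (C : Matrix (Fin d) (Fin d) ℝ) (hC : C.IsHermitian)
    (v : EuclideanSpace ℝ (Fin d)) :
    (⨅ i, hC.eigenvalues i) * ‖v‖ ^ 2 ≤ inner ℝ v (mApp C v) := by
  rw [← hC.eigenvectorBasis.sum_sq_norm_inner_right v,
    ← hC.eigenvectorBasis.sum_inner_mul_inner v (mApp C v), Finset.mul_sum]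
  refine Finset.sum_le_sum fun i _ => ?_
  rw [mApp_coord, real_inner_comm, Real.norm_eq_abs, sq_abs]
  have := ciInf_le (Set.finite_range hC.eigenvalues).bddBelow i
  nlinarith [sq_nonneg (inner ℝ v (hC.eigenvectorBasis i))]

lemma mApp_upper {d : ℕ} (C : Matrix (Fin d) (Fin d) ℝ) (hC : C.PosDef) (hd : 0 < d)
    (v : EuclideanSpace ℝ (Fin d)) :
    ‖mApp C v‖ ≤ (⨆ i, hC.1.eigenvalues i) * ‖v‖ := by
  have hb := fun i => le_ciSup (Set.finite_range hC.1.eigenvalues).bddAbove i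
  have h0 : 0 ≤ ⨆ i, hC.1.eigenvalues i := (hC.eigenvalues_pos ⟨0, hd⟩).le.trans (hb _)
  refine (sq_le_sq₀ (norm_nonneg _) (by positivity)).1 ?_
  rw [mul_pow, ← hC.1.eigenvectorBasis.sum_sq_norm_inner_right v,
    ← hC.1.eigenvectorBasis.sum_sq_norm_inner_right (mApp C v), Finset.mul_sum]
  refine Finset.sum_le_sum fun i _ => ?_
  rw [mApp_coord, norm_mul, mul_pow]
  gcongr
  rw [Real.norm_eq_abs, abs_of_pos (hC.eigenvalues_pos i)]
  exact hb i

lemma prox_key {d : ℕ} (f : EuclideanSpace ℝ (Fin d) → EReal)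
    (m : ℝ) (hsc : StrongConvexFnE m f)
    (hbot : ∀ x, f x ≠ ⊥)
    (C : Matrix (Fin d) (Fin d) ℝ) (hC : C.IsHermitian)
    (x w u : EuclideanSpace ℝ (Fin d)) (F G : ℝ) (hF : f w = F) (hG : f u = G)
    (hw : w ∈ proxSet f C x) :
    m / 2 * ‖u - w‖ ^ 2 ≤ G - F + inner ℝ (u - w) (mApp C (w - x)) := by
  have := sp_lim (G - F + inner ℝ (u - w) (mApp C (w - x)) - m / 2 * ‖u - w‖ ^ 2)
    (m / 2 * ‖u - w‖ ^ 2 + cnormSq C (u - w) / 2) ?_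
  · linarith
  intro t ht ht1
  have h1 := hsc w u (1 - t) t (by linarith) ht.le (by ring)
  have h2 := hw ((1 - t) • w + t • u)
  simp only [hF, hG] at h1 h2
  have hz := hbot ((1 - t) • w + t • u)
  generalize hH : f ((1 - t) • w + t • u) = H at h1 h2 hz
  induction H with
  | bot => exact absurd rfl hz
  | top =>
    rw [EReal.top_sub_coe] at h1
    exact absurd (top_le_iff.1 h1) (by norm_cast)
  | coe H =>
    norm_cast at h1 h2
    have e1 : (1 - t) • w + t • u - x = (w - x) + t • (u - w) := by module
    have e2 : cnormSq C ((w - x) + t • (u - w)) = cnormSq C (w - x)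
        + 2 * t * inner ℝ (u - w) (mApp C (w - x)) + t ^ 2 * cnormSq C (u - w) := by
      have a1 : mApp C ((w - x) + t • (u - w)) = mApp C (w - x) + t • mApp C (u - w) := by
        simp [mApp]
      have a2 : inner ℝ (w - x) (mApp C (u - w)) = inner ℝ (u - w) (mApp C (w - x)) := by
        rw [← mApp_symm C hC, real_inner_comm]
      unfold cnormSq
      rw [a1]
      simp only [inner_add_left, inner_add_right, real_inner_smul_left, real_inner_smul_right, a2]
      ring
    have e3 : ‖(1 - t) • w + t • u‖ ^ 2
        = (1 - t) * ‖w‖ ^ 2 + t * ‖u‖ ^ 2 - t * (1 - t) * ‖u - w‖ ^ 2 := by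
      simp only [← real_inner_self_eq_norm_sq, inner_add_left, inner_add_right, inner_sub_left,
        inner_sub_right, real_inner_smul_left, real_inner_smul_right, real_inner_comm u w]
      ring
    rw [e1, e2] at h2
    rw [e3] at h1
    refine nonneg_of_mul_nonneg_right (a := t) ?_ ht
    linarith

lemma prox_finite {d : ℕ} (f : EuclideanSpace ℝ (Fin d) → EReal) (hp : ProperFn f)
    (C : Matrix (Fin d) (Fin d) ℝ) (x w : EuclideanSpace ℝ (Fin d))
    (hw : w ∈ proxSet f C x) : ∃ F : ℝ, f w = F := by
  obtain ⟨⟨z, hz⟩, hb⟩ := hp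
  have h := hw z
  have hbz := hb z
  have hbw := hb w
  generalize f z = Z at *
  generalize f w = W at *
  induction Z with
  | bot => exact absurd rfl hbz
  | top => exact absurd rfl hz
  | coe Z =>
    induction W with
    | bot => exact absurd rfl hbw
    | coe W => exact ⟨W, rfl⟩
    | top =>
      rw [EReal.top_add_coe] at h
      exact absurd (top_le_iff.1 h) (by norm_cast)

/-- For a proper, strongly convex function `f` with modulus `m`, the scaled proximal operator is
Lipschitz with constant `λ_max(C)/(λ_min(C) + m)` in the Euclidean norm. -/
theorem scaled_prox_lipschitz_strongly_convex
    (d : ℕ) (hd : 0 < d) (f : EuclideanSpace ℝ (Fin d) → EReal)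
    (hproper : ProperFn f) (hconv : ConvexFnE f)
    (m : ℝ) (hm : 0 < m) (hsc : StrongConvexFnE m f)
    (C : Matrix (Fin d) (Fin d) ℝ) (hC : C.PosDef)
    (x₁ x₂ w₁ w₂ : EuclideanSpace ℝ (Fin d))
    (hw₁ : w₁ ∈ proxSet f C x₁) (hw₂ : w₂ ∈ proxSet f C x₂) :
    ‖w₁ - w₂‖ ≤
      ((⨆ i, hC.1.eigenvalues i) / ((⨅ i, hC.1.eigenvalues i) + m)) * ‖x₁ - x₂‖ := by
  obtain ⟨F, hF⟩ := prox_finite f hproper C x₁ w₁ hw₁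
  obtain ⟨G, hG⟩ := prox_finite f hproper C x₂ w₂ hw₂
  have k1 := prox_key f m hsc hproper.2 C hC.1 x₁ w₁ w₂ F G hF hG hw₁
  have k2 := prox_key f m hsc hproper.2 C hC.1 x₂ w₂ w₁ G F hG hF hw₂
  have hl := mApp_lower C hC.1 (w₁ - w₂)
  have hu := mApp_upper C hC hd (x₁ - x₂)
  have hcs := real_inner_le_norm (w₁ - w₂) (mApp C (x₁ - x₂))
  haveI : Nonempty (Fin d) := ⟨⟨0, hd⟩⟩
  have hmin : 0 ≤ ⨅ i, hC.1.eigenvalues i := le_ciInf fun i => (hC.eigenvalues_pos i).le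
  rw [norm_sub_rev w₂ w₁] at k1
  have e : inner ℝ (w₂ - w₁) (mApp C (w₁ - x₁)) + inner ℝ (w₁ - w₂) (mApp C (w₂ - x₂))
      = inner ℝ (w₁ - w₂) (mApp C (x₁ - x₂)) - inner ℝ (w₁ - w₂) (mApp C (w₁ - w₂)) := by
    simp only [mApp, map_sub, inner_sub_left, inner_sub_right]
    ring
  rw [div_mul_eq_mul_div, le_div_iff₀ (by linarith)]
  rcases (norm_nonneg (w₁ - w₂)).eq_or_lt with h0 | h0
  · rw [← h0, zero_mul]
    exact (norm_nonneg _).trans hu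
  · refine le_of_mul_le_mul_left ?_ h0
    have := mul_le_mul_of_nonneg_left hu h0.le
    nlinarith
end
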